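/- For sufficiently large ρ the following holds: if V ∈ 𝒱(r,n) and W ∈ 𝒱(r,m) are strongly distinct lattice r-subspaces, then Ξ(V) ∩ Ξ₂(W) = ∅. In particular, if θ ∈ Θ_r and θ ∉ V, then Ξ(V) ∩ Λ(θ) = ∅. -/

import Mathlib

noncomputable section

open Set Submodule Module MeasureTheory Relation
open scoped RealInnerProductSpace

variable {d : ℕ}

/-- The lattice Γ generated over ℤ by the basis `B` of ℝ^d. -/
def latticeOf (B : Basis (Fin d) ℝ (EuclideanSpace ℝ (Fin d))) :
    Submodule ℤ (EuclideanSpace ℝ (Fin d)) :=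
  Submodule.span ℤ (Set.range B)

/-- The determinant d(Γ) of the lattice generated by `B`. -/
def latDet (B : Basis (Fin d) ℝ (EuclideanSpace ℝ (Fin d))) : ℝ :=
  |(EuclideanSpace.basisFun (Fin d) ℝ).toBasis.det (fun i => B i)|

/-- The dual lattice Γ† = {θ : θ·g ∈ 2πℤ for all g ∈ Γ}. -/
def dualLattice (B : Basis (Fin d) ℝ (EuclideanSpace ℝ (Fin d))) :
    Set (EuclideanSpace ℝ (Fin d)) :=
  {θ | ∀ g ∈ latticeOf B, ∃ k : ℤ, ⟪θ, g⟫ = 2 * Real.pi * k}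

/-- Θ_r : nonzero dual lattice vectors of norm at most r. -/
def Theta (B : Basis (Fin d) ℝ (EuclideanSpace ℝ (Fin d))) (r : ℝ) :
    Set (EuclideanSpace ℝ (Fin d)) :=
  {θ | θ ∈ dualLattice B ∧ θ ≠ 0 ∧ ‖θ‖ ≤ r}

/-- Θ_r⁰ : dual lattice vectors of norm at most r (including 0). -/
def Theta0 (B : Basis (Fin d) ℝ (EuclideanSpace ℝ (Fin d))) (r : ℝ) :
    Set (EuclideanSpace ℝ (Fin d)) :=
  {θ | θ ∈ dualLattice B ∧ ‖θ‖ ≤ r}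

/-- A lattice r-subspace: a subspace spanned by dual lattice vectors from Θ_r⁰. -/
def IsLatticeSubspace (B : Basis (Fin d) ℝ (EuclideanSpace ℝ (Fin d))) (r : ℝ)
    (V : Submodule ℝ (EuclideanSpace ℝ (Fin d))) : Prop :=
  ∃ S : Set (EuclideanSpace ℝ (Fin d)), S ⊆ Theta0 B r ∧ V = Submodule.span ℝ S

/-- Orthogonal projection ξ_V onto a subspace, viewed in the ambient space. -/
def projV (V : Submodule ℝ (EuclideanSpace ℝ (Fin d))) (ξ : EuclideanSpace ℝ (Fin d)) :
    EuclideanSpace ℝ (Fin d) :=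
  (orthogonalProjection V ξ : EuclideanSpace ℝ (Fin d))

/-- ω_n: the volume of the unit ball in ℝ^n. -/
def unitBallVol (n : ℕ) : ℝ :=
  (MeasureTheory.volume (Metric.ball (0 : EuclideanSpace ℝ (Fin n)) 1)).toReal

/-- The resonant layer Λ(θ) (= ℝ^d when θ = 0). -/
def layer (ρ a : ℝ) (θ : EuclideanSpace ℝ (Fin d)) : Set (EuclideanSpace ℝ (Fin d)) :=
  {ξ | θ = 0 ∨ |⟪ξ, θ⟫| < ρ ^ a * ‖θ‖}

/-- Υ_θ(ξ): the points θ-resonant congruent to ξ. -/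
def upsTheta (ρ a : ℝ) (θ ξ : EuclideanSpace ℝ (Fin d)) : Set (EuclideanSpace ℝ (Fin d)) :=
  {η | ξ ∈ layer ρ a θ ∧ η ∈ layer ρ a θ ∧ ∃ l : ℤ, ξ - η = (l : ℝ) • θ}

/-- One step of resonant congruence (with some θ ∈ Θ_r⁰). -/
def resStep (B : Basis (Fin d) ℝ (EuclideanSpace ℝ (Fin d))) (ρ a r : ℝ)
    (ξ η : EuclideanSpace ℝ (Fin d)) : Prop :=
  ∃ θ ∈ Theta0 B r, η ∈ upsTheta ρ a θ ξ

/-- Υ(ξ): all points resonant congruent to ξ. -/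
def Ups (B : Basis (Fin d) ℝ (EuclideanSpace ℝ (Fin d))) (ρ a r : ℝ)
    (ξ : EuclideanSpace ℝ (Fin d)) : Set (EuclideanSpace ℝ (Fin d)) :=
  {η | Relation.ReflTransGen (resStep B ρ a r) ξ η}

/-- N(ξ) = Υ(ξ) − ξ. -/
def resN (B : Basis (Fin d) ℝ (EuclideanSpace ℝ (Fin d))) (ρ a r : ℝ)
    (ξ : EuclideanSpace ℝ (Fin d)) : Set (EuclideanSpace ℝ (Fin d)) :=
  {m | ξ + m ∈ Ups B ρ a r ξ}

/-- Ξ₁(V) = {ξ : |ξ_V| < ρ^{α_n}}, n = dim V. -/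
def Xi1 (ρ : ℝ) (α : ℕ → ℝ) (V : Submodule ℝ (EuclideanSpace ℝ (Fin d))) :
    Set (EuclideanSpace ℝ (Fin d)) :=
  {ξ | ‖projV V ξ‖ < ρ ^ α (Module.finrank ℝ V)}

/-- Ξ₂(V) = ∪_{ξ ∈ Ξ₁(V)} Υ(ξ). -/
def Xi2 (B : Basis (Fin d) ℝ (EuclideanSpace ℝ (Fin d))) (ρ r : ℝ) (α : ℕ → ℝ)
    (V : Submodule ℝ (EuclideanSpace ℝ (Fin d))) : Set (EuclideanSpace ℝ (Fin d)) :=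
  {η | ∃ ξ ∈ Xi1 ρ α V, η ∈ Ups B ρ (α 1) r ξ}

/-- Ξ(V): Ξ₂(V) minus the Ξ₂(W) for all lattice r-subspaces W of larger dimension. -/
def Xi (B : Basis (Fin d) ℝ (EuclideanSpace ℝ (Fin d))) (ρ r : ℝ) (α : ℕ → ℝ)
    (V : Submodule ℝ (EuclideanSpace ℝ (Fin d))) : Set (EuclideanSpace ℝ (Fin d)) :=
  Xi2 B ρ r α V \
    ⋃ W ∈ {W : Submodule ℝ (EuclideanSpace ℝ (Fin d)) |
        IsLatticeSubspace B r W ∧ Module.finrank ℝ V < Module.finrank ℝ W},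
      Xi2 B ρ r α W

/-- The standing conditions on the parameters ρ ≥ 1, r, κ > 0 and the exponents α_j:
0 = α₀, α_{n+1} > α_n + 2κd², α_d < 1, r ≤ ρ^κ, and r ≥ r₀ (i.e. Θ_r⁰ spans ℝ^d). -/
def GoodParams (B : Basis (Fin d) ℝ (EuclideanSpace ℝ (Fin d))) (ρ r κ : ℝ)
    (α : ℕ → ℝ) : Prop :=
  1 ≤ ρ ∧ 0 < κ ∧ α 0 = 0 ∧ (∀ n < d, α n + 2 * κ * (d : ℝ) ^ 2 < α (n + 1)) ∧
    α d < 1 ∧ r ≤ ρ ^ κ ∧ Submodule.span ℝ (Theta0 B r) = ⊤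

lemma projV_eq_starProjection (V : Submodule ℝ (EuclideanSpace ℝ (Fin d)))
    (ξ : EuclideanSpace ℝ (Fin d)) : projV V ξ = V.starProjection ξ := rfl

lemma projV_mem (V : Submodule ℝ (EuclideanSpace ℝ (Fin d)))
    (ξ : EuclideanSpace ℝ (Fin d)) : projV V ξ ∈ V :=
  V.starProjection_apply_mem ξ

lemma norm_projV_le (V : Submodule ℝ (EuclideanSpace ℝ (Fin d)))
    (ξ : EuclideanSpace ℝ (Fin d)) : ‖projV V ξ‖ ≤ ‖ξ‖ :=
  V.norm_starProjection_apply_le ξ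

lemma projV_of_mem {V : Submodule ℝ (EuclideanSpace ℝ (Fin d))}
    {ξ : EuclideanSpace ℝ (Fin d)} (h : ξ ∈ V) : projV V ξ = ξ :=
  starProjection_eq_self_iff.mpr h

lemma projV_sub (V : Submodule ℝ (EuclideanSpace ℝ (Fin d)))
    (ξ η : EuclideanSpace ℝ (Fin d)) : projV V (ξ - η) = projV V ξ - projV V η :=
  map_sub V.starProjection ξ η

lemma inner_projV_of_mem {V : Submodule ℝ (EuclideanSpace ℝ (Fin d))}
    {x : EuclideanSpace ℝ (Fin d)} (hx : x ∈ V) (ξ : EuclideanSpace ℝ (Fin d)) :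
    ⟪x, projV V ξ⟫ = ⟪x, ξ⟫ := by
  rw [projV_eq_starProjection, ← V.inner_starProjection_left_eq_right,
    starProjection_eq_self_iff.mpr hx]

lemma norm_projV_le_add (V : Submodule ℝ (EuclideanSpace ℝ (Fin d)))
    (ξ η : EuclideanSpace ℝ (Fin d)) : ‖projV V ξ‖ ≤ ‖projV V η‖ + ‖ξ - η‖ := by
  have h1 : projV V ξ = projV V η + projV V (ξ - η) := by rw [projV_sub]; abel
  rw [h1]
  exact (norm_add_le _ _).trans (add_le_add le_rfl (norm_projV_le _ _))

lemma abs_inner_le_of_mem {V : Submodule ℝ (EuclideanSpace ℝ (Fin d))}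
    {x : EuclideanSpace ℝ (Fin d)} (hx : x ∈ V) (ξ : EuclideanSpace ℝ (Fin d)) :
    |⟪x, ξ⟫| ≤ ‖x‖ * ‖projV V ξ‖ := by
  rw [← inner_projV_of_mem hx]
  exact abs_real_inner_le_norm _ _

/-- A bound for the norms of the basis vectors `B j`. -/
def basisBound (B : Basis (Fin d) ℝ (EuclideanSpace ℝ (Fin d))) : ℝ := ∑ j, ‖B j‖

/-- The lattice constant in the lower bound for the distance of a dual lattice vector to a
lattice subspace. -/
def angleConst (B : Basis (Fin d) ℝ (EuclideanSpace ℝ (Fin d))) : ℝ :=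
  (d.factorial : ℝ) * basisBound B ^ d

lemma norm_le_basisBound (B : Basis (Fin d) ℝ (EuclideanSpace ℝ (Fin d))) (j : Fin d) :
    ‖B j‖ ≤ basisBound B :=
  Finset.single_le_sum (f := fun j => ‖B j‖) (fun _ _ => norm_nonneg _) (Finset.mem_univ j)

lemma basisBound_nonneg (B : Basis (Fin d) ℝ (EuclideanSpace ℝ (Fin d))) :
    0 ≤ basisBound B := Finset.sum_nonneg fun _ _ => norm_nonneg _

lemma angleConst_nonneg (B : Basis (Fin d) ℝ (EuclideanSpace ℝ (Fin d))) :
    0 ≤ angleConst B :=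
  mul_nonneg (Nat.cast_nonneg _) (pow_nonneg (basisBound_nonneg B) d)

/-- The matrix of pairings of the family `v` with the lattice basis. -/
def pairing (B : Basis (Fin d) ℝ (EuclideanSpace ℝ (Fin d)))
    (v : Fin d → EuclideanSpace ℝ (Fin d)) : Matrix (Fin d) (Fin d) ℝ :=
  Matrix.of fun i j => ⟪v i, B j⟫

lemma pairing_update (B : Basis (Fin d) ℝ (EuclideanSpace ℝ (Fin d)))
    (v : Fin d → EuclideanSpace ℝ (Fin d)) (i : Fin d) (x : EuclideanSpace ℝ (Fin d)) :
    pairing B (Function.update v i x) = (pairing B v).updateRow i (fun j => ⟪x, B j⟫) := by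
  ext k j
  by_cases h : k = i
  · subst h; simp [pairing]
  · simp [pairing, h]

/-- The pairing determinant as a linear function of its `i`-th row. -/
def detRow (B : Basis (Fin d) ℝ (EuclideanSpace ℝ (Fin d)))
    (v : Fin d → EuclideanSpace ℝ (Fin d)) (i : Fin d) : EuclideanSpace ℝ (Fin d) →ₗ[ℝ] ℝ where
  toFun x := (pairing B (Function.update v i x)).det
  map_add' x y := by
    simp only [pairing_update, inner_add_left]
    exact Matrix.det_updateRow_add _ _ _ _
  map_smul' c x := by
    simp only [pairing_update, real_inner_smul_left, smul_eq_mul, RingHom.id_apply]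
    exact Matrix.det_updateRow_smul _ _ _ _

lemma detRow_self (B : Basis (Fin d) ℝ (EuclideanSpace ℝ (Fin d)))
    (v : Fin d → EuclideanSpace ℝ (Fin d)) (i : Fin d) :
    detRow B v i (v i) = (pairing B v).det := by
  simp [detRow]

lemma detRow_other (B : Basis (Fin d) ℝ (EuclideanSpace ℝ (Fin d)))
    (v : Fin d → EuclideanSpace ℝ (Fin d)) {i j : Fin d} (h : j ≠ i) :
    detRow B v i (v j) = 0 := by
  refine Matrix.det_zero_of_row_eq h.symm ?_
  ext k
  simp [pairing, h]

lemma pairing_det_ne_zero (B : Basis (Fin d) ℝ (EuclideanSpace ℝ (Fin d)))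
    (v : Fin d → EuclideanSpace ℝ (Fin d)) (hv : span ℝ (range v) = ⊤) :
    (pairing B v).det ≠ 0 := by
  intro h
  obtain ⟨x, hx0, hx⟩ := Matrix.exists_mulVec_eq_zero_iff.mpr h
  apply hx0
  have hz : ∑ j, x j • B j = 0 := by
    have key : ∀ w ∈ span ℝ (range v), ⟪w, ∑ j, x j • B j⟫ = 0 := by
      intro w hw
      induction hw using span_induction with
      | mem w hw =>
        obtain ⟨i, rfl⟩ := hw
        have := congrFun hx i
        simp only [Matrix.mulVec, dotProduct, pairing, Matrix.of_apply, Pi.zero_apply] at this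
        simp only [inner_sum, real_inner_smul_right]
        rw [← this]
        exact Finset.sum_congr rfl fun j _ => mul_comm _ _
      | zero => simp
      | add a b _ _ ha hb => rw [inner_add_left, ha, hb, add_zero]
      | smul c a _ ha => rw [real_inner_smul_left, ha, mul_zero]
    exact inner_self_eq_zero.mp (key _ (hv ▸ mem_top))
  funext j
  exact Fintype.linearIndependent_iff.mp B.linearIndependent x hz j

lemma one_le_abs_pairing_det (B : Basis (Fin d) ℝ (EuclideanSpace ℝ (Fin d)))
    (v : Fin d → EuclideanSpace ℝ (Fin d)) (hv : span ℝ (range v) = ⊤)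
    (hdual : ∀ i, v i ∈ dualLattice B) : 1 ≤ |(pairing B v).det| := by
  have hB : ∀ j, B j ∈ latticeOf B := fun j => subset_span (mem_range_self j)
  choose k hk using fun i j => hdual i (B j) (hB j)
  have hM : pairing B v = (2 * Real.pi) • (Matrix.of k).map (Int.castRingHom ℝ) := by
    ext i j
    simp [pairing, hk]
  have hdet : (pairing B v).det = (2 * Real.pi) ^ d * (((Matrix.of k).det : ℤ) : ℝ) := by
    rw [hM, Matrix.det_smul, Fintype.card_fin, ← RingHom.mapMatrix_apply, ← RingHom.map_det]
    rfl
  have hne : (Matrix.of k).det ≠ 0 := by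
    intro h0
    apply pairing_det_ne_zero B v hv
    rw [hdet, h0]; simp
  rw [hdet, abs_mul]
  have h1 : (1 : ℝ) ≤ |(2 * Real.pi) ^ d| := by
    rw [abs_of_pos (by positivity)]
    exact one_le_pow₀ (by linarith [Real.pi_gt_three])
  have h2 : (1 : ℝ) ≤ |(((Matrix.of k).det : ℤ) : ℝ)| := by
    exact_mod_cast Int.one_le_abs hne
  exact one_le_mul_of_one_le_of_one_le h1 h2

/-- A spanning family of short dual lattice vectors through `θ` whose remaining members
have `U` in their span. -/
lemma exists_adapted_family (B : Basis (Fin d) ℝ (EuclideanSpace ℝ (Fin d))) {r : ℝ}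
    (hspan : span ℝ (Theta0 B r) = ⊤) {U : Submodule ℝ (EuclideanSpace ℝ (Fin d))}
    (hU : IsLatticeSubspace B r U) {θ : EuclideanSpace ℝ (Fin d)} (hθ : θ ∈ Theta0 B r)
    (hθU : θ ∉ U) :
    ∃ (v : Fin d → EuclideanSpace ℝ (Fin d)) (i : Fin d), (∀ j, v j ∈ Theta0 B r) ∧
      span ℝ (range v) = ⊤ ∧ v i = θ ∧ U ≤ span ℝ (v '' {j | j ≠ i}) := by
  obtain ⟨S, hS, rfl⟩ := hU
  obtain ⟨b, hbS, -, hSb, hb⟩ :=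
    exists_linearIndepOn_id_extension (linearIndepOn_empty ℝ id) (empty_subset S)
  have hspanb : span ℝ b = span ℝ S := le_antisymm (span_mono hbS) (span_le.mpr hSb)
  have hb' : LinearIndepOn ℝ id (insert θ b) := by
    refine hb.id_insert ?_
    rwa [hspanb]
  obtain ⟨c, hcT, hbc, hTc, hc⟩ := exists_linearIndepOn_id_extension hb'
    (insert_subset hθ (hbS.trans hS))
  have hctop : span ℝ c = ⊤ := top_le_iff.mp (hspan ▸ span_le.mpr hTc)
  let C : Basis c ℝ (EuclideanSpace ℝ (Fin d)) :=
    Basis.mk (v := ((↑) : c → EuclideanSpace ℝ (Fin d))) hc (by simp [hctop])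
  let e : c ≃ Fin d := C.indexEquiv (EuclideanSpace.basisFun (Fin d) ℝ).toBasis
  have hθc : θ ∈ c := hbc (mem_insert _ _)
  refine ⟨fun j => (e.symm j : EuclideanSpace ℝ (Fin d)), e ⟨θ, hθc⟩,
    fun j => hcT (e.symm j).2, ?_, by simp, ?_⟩
  · rw [← hctop]
    congr 1
    ext x
    simp only [mem_range]
    exact ⟨fun ⟨j, hj⟩ => hj ▸ (e.symm j).2, fun hx => ⟨e ⟨x, hx⟩, by simp⟩⟩
  · rw [← hspanb]
    refine span_mono fun x hx => ⟨e ⟨x, hbc (mem_insert_of_mem _ hx)⟩, ?_, by simp⟩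
    intro h
    have hxθ : x = θ := congrArg Subtype.val (e.injective h)
    exact hθU (hspanb ▸ subset_span (hxθ ▸ hx))

/-- A dual lattice vector outside a lattice subspace is quantitatively far from it. -/
lemma dist_lattice_subspace (B : Basis (Fin d) ℝ (EuclideanSpace ℝ (Fin d))) {r R : ℝ}
    (hR : 0 < R) (hrR : r ≤ R) (hspan : span ℝ (Theta0 B r) = ⊤)
    {U : Submodule ℝ (EuclideanSpace ℝ (Fin d))}
    (hU : IsLatticeSubspace B r U) {θ : EuclideanSpace ℝ (Fin d)} (hθ : θ ∈ Theta0 B r)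
    (hθU : θ ∉ U) :
    R ≤ angleConst B * R ^ d * ‖θ - projV U θ‖ := by
  obtain ⟨v, i, hv, hvs, hvi, hUv⟩ := exists_adapted_family B hspan hU hθ hθU
  set u := θ - projV U θ with hu
  have hupos : 0 < ‖u‖ := by
    rw [norm_pos_iff, hu, sub_ne_zero]
    intro h
    exact hθU (h ▸ projV_mem U θ)
  have hLU : ∀ x ∈ U, detRow B v i x = 0 := by
    intro x hx
    have hle : span ℝ (v '' {j | j ≠ i}) ≤ LinearMap.ker (detRow B v i) := by
      rw [span_le]
      rintro _ ⟨j, hj, rfl⟩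
      exact detRow_other B v hj
    exact hle (hUv hx)
  have hLu : 1 ≤ |detRow B v i u| := by
    have h0 : detRow B v i (projV U θ) = 0 := hLU _ (projV_mem U θ)
    rw [hu, map_sub, h0, sub_zero, ← hvi, detRow_self]
    exact one_le_abs_pairing_det B v hvs fun j => (hv j).1
  have hscaled : |detRow B v i ((R / ‖u‖) • u)| ≤ angleConst B * R ^ d := by
    have hle := Matrix.det_le (A := pairing B (Function.update v i ((R / ‖u‖) • u)))
      (abv := AbsoluteValue.abs) (x := basisBound B * R) (by
        intro k j
        have hrow : ‖Function.update v i ((R / ‖u‖) • u) k‖ ≤ R := by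
          by_cases hk : k = i
          · subst hk
            rw [Function.update_self, norm_smul, norm_div, norm_norm, Real.norm_of_nonneg hR.le,
              div_mul_cancel₀ _ hupos.ne']
          · rw [Function.update_of_ne hk]
            exact (hv k).2.trans hrR
        calc |⟪Function.update v i ((R / ‖u‖) • u) k, B j⟫|
            ≤ ‖Function.update v i ((R / ‖u‖) • u) k‖ * ‖B j‖ := abs_real_inner_le_norm _ _
          _ ≤ R * basisBound B := by
              gcongr
              exact norm_le_basisBound B j
          _ = basisBound B * R := mul_comm _ _)
    rw [Fintype.card_fin, nsmul_eq_mul, mul_pow, ← mul_assoc] at hle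
    exact hle
  rw [map_smul, smul_eq_mul, abs_mul, abs_of_pos (div_pos hR hupos)] at hscaled
  have h1 : R / ‖u‖ ≤ angleConst B * R ^ d :=
    (le_mul_of_one_le_right (div_pos hR hupos).le hLu).trans hscaled
  rwa [div_le_iff₀ hupos] at h1

/-- Adjoining one vector at a controlled distance to `U` enlarges the projection of `ξ` in a
controlled way. -/
lemma norm_projV_sup_span_le {U : Submodule ℝ (EuclideanSpace ℝ (Fin d))}
    {θ ξ : EuclideanSpace ℝ (Fin d)} {b R C : ℝ} (hC : 0 ≤ C) (hb : 0 ≤ b) (hξU : ‖projV U ξ‖ ≤ b)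
    (hξθ : |⟪ξ, θ⟫| ≤ b * ‖θ‖) (hθR : ‖θ‖ ≤ R) (hdist : R ≤ C * ‖θ - projV U θ‖) :
    ‖projV (U ⊔ span ℝ {θ}) ξ‖ ≤ (1 + 2 * C) * b := by
  set P := projV (U ⊔ span ℝ {θ}) ξ with hP
  set u := θ - projV U θ with hu
  obtain ⟨y, hy, z, hz, hyz⟩ := mem_sup.mp (projV_mem (U ⊔ span ℝ {θ}) ξ)
  obtain ⟨t, rfl⟩ := mem_span_singleton.mp hz
  set x := y + t • projV U θ with hx
  have hxU : x ∈ U := U.add_mem hy (U.smul_mem _ (projV_mem _ _))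
  have hPx : P = x + t • u := by
    rw [hP, ← hyz, hx, hu, smul_sub]; abel
  have hxu : ⟪x, u⟫ = 0 := by
    rw [hu, inner_sub_right, inner_projV_of_mem hxU, sub_self]
  have hpyth : ‖P‖ ^ 2 = ‖x‖ ^ 2 + (|t| * ‖u‖) ^ 2 := by
    have h := norm_add_sq_real x (t • u)
    rw [real_inner_smul_right, hxu, norm_smul, Real.norm_eq_abs] at h
    rw [hPx, h]; ring
  have hxP : ‖x‖ ≤ ‖P‖ := by
    refine le_of_sq_le_sq ?_ (norm_nonneg _)
    nlinarith [sq_nonneg (|t| * ‖u‖)]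
  have htP : |t| * ‖u‖ ≤ ‖P‖ := by
    refine le_of_sq_le_sq ?_ (norm_nonneg _)
    nlinarith [sq_nonneg ‖x‖]
  have hsq : ‖P‖ ^ 2 = ⟪x, ξ⟫ + t * ⟪u, ξ⟫ := by
    rw [← real_inner_self_eq_norm_sq]
    nth_rw 2 [hP]
    rw [inner_projV_of_mem (projV_mem (U ⊔ span ℝ {θ}) ξ), ← hP, hPx, inner_add_left,
      real_inner_smul_left]
  have hxξ : ⟪x, ξ⟫ ≤ ‖P‖ * b :=
    (le_abs_self _).trans ((abs_inner_le_of_mem hxU ξ).trans (by gcongr))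
  have huξ : |⟪u, ξ⟫| ≤ 2 * C * b * ‖u‖ := by
    have h1 : |⟪projV U θ, ξ⟫| ≤ ‖θ‖ * b :=
      (abs_inner_le_of_mem (projV_mem U θ) ξ).trans
        (mul_le_mul (norm_projV_le _ _) hξU (norm_nonneg _) (norm_nonneg _))
    rw [real_inner_comm] at hξθ
    rw [hu, inner_sub_left, ← hu]
    calc |⟪θ, ξ⟫ - ⟪projV U θ, ξ⟫| ≤ |⟪θ, ξ⟫| + |⟪projV U θ, ξ⟫| := abs_sub _ _
      _ ≤ b * ‖θ‖ + ‖θ‖ * b := add_le_add hξθ h1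
      _ = 2 * b * ‖θ‖ := by ring
      _ ≤ 2 * b * (C * ‖u‖) := by gcongr; exact hθR.trans hdist
      _ = 2 * C * b * ‖u‖ := by ring
  have htu : t * ⟪u, ξ⟫ ≤ ‖P‖ * (2 * C * b) := by
    calc t * ⟪u, ξ⟫ ≤ |t| * |⟪u, ξ⟫| := by rw [← abs_mul]; exact le_abs_self _
      _ ≤ |t| * (2 * C * b * ‖u‖) := by gcongr
      _ = (|t| * ‖u‖) * (2 * C * b) := by ring
      _ ≤ ‖P‖ * (2 * C * b) := by gcongr
  rcases (norm_nonneg P).eq_or_lt with h0 | hpos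
  · rw [← h0]
    positivity
  · refine le_of_mul_le_mul_left ?_ hpos
    nlinarith

lemma IsLatticeSubspace.sup_span {B : Basis (Fin d) ℝ (EuclideanSpace ℝ (Fin d))} {r : ℝ}
    {V : Submodule ℝ (EuclideanSpace ℝ (Fin d))} (hV : IsLatticeSubspace B r V)
    {θ : EuclideanSpace ℝ (Fin d)} (hθ : θ ∈ Theta0 B r) :
    IsLatticeSubspace B r (V ⊔ span ℝ {θ}) := by
  obtain ⟨S, hS, rfl⟩ := hV
  exact ⟨S ∪ {θ}, union_subset hS (singleton_subset_iff.mpr hθ), (span_union _ _).symm⟩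

/-- A chain of `n` resonant congruences from `ξ` to `η` whose directions span `T`. -/
inductive ResChain (B : Basis (Fin d) ℝ (EuclideanSpace ℝ (Fin d))) (ρ a r : ℝ) :
    ℕ → Submodule ℝ (EuclideanSpace ℝ (Fin d)) → EuclideanSpace ℝ (Fin d) →
      EuclideanSpace ℝ (Fin d) → Prop
  | refl (ξ : EuclideanSpace ℝ (Fin d)) : ResChain B ρ a r 0 ⊥ ξ ξ
  | snoc {n : ℕ} {T : Submodule ℝ (EuclideanSpace ℝ (Fin d))}
      {ξ ζ η θ : EuclideanSpace ℝ (Fin d)} (hc : ResChain B ρ a r n T ξ ζ)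
      (hθ : θ ∈ Theta0 B r) (hη : η ∈ upsTheta ρ a θ ζ) :
      ResChain B ρ a r (n + 1) (T ⊔ span ℝ {θ}) ξ η

namespace ResChain

variable {B : Basis (Fin d) ℝ (EuclideanSpace ℝ (Fin d))} {ρ a r : ℝ} {n : ℕ}
  {T : Submodule ℝ (EuclideanSpace ℝ (Fin d))} {ξ ζ η θ : EuclideanSpace ℝ (Fin d)}

lemma cons (hθ : θ ∈ Theta0 B r) (hζ : ζ ∈ upsTheta ρ a θ ξ) (hc : ResChain B ρ a r n T ζ η) :
    ResChain B ρ a r (n + 1) (T ⊔ span ℝ {θ}) ξ η := by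
  induction hc with
  | refl ζ => exact (refl ξ).snoc hθ hζ
  | snoc hc hθ' hη ih =>
    rw [sup_right_comm]
    exact (ih hζ).snoc hθ' hη

lemma symm (hc : ResChain B ρ a r n T ξ η) : ResChain B ρ a r n T η ξ := by
  induction hc with
  | refl ξ => exact refl ξ
  | snoc hc hθ hη ih =>
    obtain ⟨h1, h2, l, hl⟩ := hη
    exact cons hθ ⟨h2, h1, -l, by rw [← neg_sub, hl]; push_cast; rw [neg_smul]⟩ ih

lemma sub_mem (hc : ResChain B ρ a r n T ξ η) : ξ - η ∈ T := by
  induction hc with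
  | refl ξ => simp
  | @snoc n T ξ ζ η θ hc hθ hη ih =>
    obtain ⟨-, -, l, hl⟩ := hη
    rw [← sub_add_sub_cancel ξ ζ η, hl]
    exact add_mem_sup ih (smul_mem _ _ (mem_span_singleton_self θ))

lemma isLatticeSubspace (hc : ResChain B ρ a r n T ξ η) : IsLatticeSubspace B r T := by
  induction hc with
  | refl ξ => exact ⟨∅, empty_subset _, span_empty.symm⟩
  | snoc hc hθ hη ih => exact ih.sup_span hθ

lemma exists_of_mem_Ups (h : η ∈ Ups B ρ a r ξ) : ∃ n T, ResChain B ρ a r n T ξ η := by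
  change ReflTransGen (resStep B ρ a r) ξ η at h
  induction h with
  | refl => exact ⟨0, ⊥, refl ξ⟩
  | tail _ hstep ih =>
    obtain ⟨n, T, hc⟩ := ih
    obtain ⟨θ, hθ, hη⟩ := hstep
    exact ⟨_, _, hc.snoc hθ hη⟩

lemma mem_Ups (hc : ResChain B ρ a r n T ξ η) : η ∈ Ups B ρ a r ξ := by
  induction hc with
  | refl ξ => exact ReflTransGen.refl
  | snoc hc hθ hη ih => exact ReflTransGen.tail ih ⟨_, hθ, hη⟩

end ResChain

lemma mem_Ups_symm {B : Basis (Fin d) ℝ (EuclideanSpace ℝ (Fin d))} {ρ a r : ℝ}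
    {ξ η : EuclideanSpace ℝ (Fin d)} (h : η ∈ Ups B ρ a r ξ) : ξ ∈ Ups B ρ a r η := by
  obtain ⟨n, T, hc⟩ := ResChain.exists_of_mem_Ups h
  exact hc.symm.mem_Ups

/-- The factor lost when one dual lattice vector is adjoined to a lattice subspace. -/
def stepFactor (B : Basis (Fin d) ℝ (EuclideanSpace ℝ (Fin d))) (R : ℝ) : ℝ :=
  3 + 2 * (angleConst B * R ^ d)

lemma one_le_stepFactor (B : Basis (Fin d) ℝ (EuclideanSpace ℝ (Fin d))) {R : ℝ}
    (hR : 0 < R) : 1 ≤ stepFactor B R := by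
  have : 0 ≤ angleConst B * R ^ d := mul_nonneg (angleConst_nonneg B) (by positivity)
  unfold stepFactor
  linarith

lemma norm_projV_sup_lattice_le (B : Basis (Fin d) ℝ (EuclideanSpace ℝ (Fin d))) {r R : ℝ}
    (hR : 0 < R) (hrR : r ≤ R) (hspan : span ℝ (Theta0 B r) = ⊤)
    {U : Submodule ℝ (EuclideanSpace ℝ (Fin d))} (hU : IsLatticeSubspace B r U)
    {θ ξ : EuclideanSpace ℝ (Fin d)} (hθ : θ ∈ Theta0 B r) (hθU : θ ∉ U) {b : ℝ}
    (hξU : ‖projV U ξ‖ ≤ b) (hξθ : |⟪ξ, θ⟫| ≤ b * ‖θ‖) :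
    ‖projV (U ⊔ span ℝ {θ}) ξ‖ + 2 * b ≤ stepFactor B R * b := by
  have h := norm_projV_sup_span_le
    (mul_nonneg (angleConst_nonneg B) (pow_nonneg hR.le d))
    ((norm_nonneg _).trans hξU) hξU hξθ (hθ.2.trans hrR)
    (dist_lattice_subspace B hR hrR hspan hU hθ hθU)
  unfold stepFactor
  linarith

lemma finrank_lt_finrank_sup_span {U : Submodule ℝ (EuclideanSpace ℝ (Fin d))}
    {θ : EuclideanSpace ℝ (Fin d)} (hθU : θ ∉ U) :
    finrank ℝ U < finrank ℝ (U ⊔ span ℝ {θ} : Submodule ℝ (EuclideanSpace ℝ (Fin d))) := by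
  refine finrank_lt_finrank_of_lt (left_lt_sup.mpr ?_)
  rwa [span_singleton_le_iff_mem]

namespace ResChain

variable {B : Basis (Fin d) ℝ (EuclideanSpace ℝ (Fin d))} {ρ a r R : ℝ} {n : ℕ}
  {T : Submodule ℝ (EuclideanSpace ℝ (Fin d))} {ξ η : EuclideanSpace ℝ (Fin d)}

lemma norm_sub_le {D : ℝ} (hc : ResChain B ρ a r n T ξ η) (hξ : ‖projV T ξ‖ ≤ D)
    (hη : ‖projV T η‖ ≤ D) : ‖ξ - η‖ ≤ 2 * D := by
  rw [← projV_of_mem hc.sub_mem, projV_sub]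
  linarith [_root_.norm_sub_le (projV T ξ) (projV T η)]

/-- The starting point of a chain is almost orthogonal to the directions of the chain. -/
lemma norm_projV_le (hρ : 0 ≤ ρ) (hR : 0 < R) (hrR : r ≤ R)
    (hspan : span ℝ (Theta0 B r) = ⊤) (hc : ResChain B ρ a r n T ξ η) :
    ‖projV T ξ‖ ≤ stepFactor B R ^ finrank ℝ T * ρ ^ a := by
  have hA := one_le_stepFactor B hR
  have hD : 0 ≤ ρ ^ a := Real.rpow_nonneg hρ a
  induction n generalizing T ξ η with
  | zero =>
    cases hc
    rw [(mem_bot ℝ).mp (projV_mem ⊥ ξ), norm_zero]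
    positivity
  | succ n ih =>
    cases hc with
    | @snoc _ T' _ ζ _ θ hc hθ hη =>
      by_cases hθT : θ ∈ T'
      · rw [sup_eq_left.mpr ((span_singleton_le_iff_mem _ _).mpr hθT)]
        exact ih hc
      · have hξ := ih hc
        have hζ := ih hc.symm
        set b := stepFactor B R ^ finrank ℝ T' * ρ ^ a with hb
        have hρb : ρ ^ a ≤ b := le_mul_of_one_le_left hD (one_le_pow₀ hA)
        have hζθ : |⟪ζ, θ⟫| ≤ b * ‖θ‖ := by
          rcases hη.1 with h0 | h
          · simp [h0]
          · exact h.le.trans (by gcongr)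
        have hstep := norm_projV_sup_lattice_le B hR hrR hspan hc.isLatticeSubspace hθ hθT hζ hζθ
        have hpow : stepFactor B R * b ≤ stepFactor B R ^
            finrank ℝ (T' ⊔ span ℝ {θ} : Submodule ℝ (EuclideanSpace ℝ (Fin d))) * ρ ^ a := by
          rw [hb, ← mul_assoc, ← pow_succ']
          exact mul_le_mul_of_nonneg_right
            (pow_le_pow_right₀ hA (finrank_lt_finrank_sup_span hθT)) hD
        linarith [norm_projV_le_add (T' ⊔ span ℝ {θ}) ξ ζ, hc.norm_sub_le hξ hζ]

end ResChain

/-- Resonance classes have controlled diameter. -/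
lemma norm_sub_le_of_mem_Ups {B : Basis (Fin d) ℝ (EuclideanSpace ℝ (Fin d))} {ρ a r R : ℝ}
    (hρ : 0 ≤ ρ) (hR : 0 < R) (hrR : r ≤ R) (hspan : span ℝ (Theta0 B r) = ⊤)
    {ξ η : EuclideanSpace ℝ (Fin d)} (h : η ∈ Ups B ρ a r ξ) :
    ‖ξ - η‖ ≤ 2 * (stepFactor B R ^ d * ρ ^ a) := by
  obtain ⟨n, T, hc⟩ := ResChain.exists_of_mem_Ups h
  have hT : finrank ℝ T ≤ d := by simpa using T.finrank_le
  have hpow : stepFactor B R ^ finrank ℝ T * ρ ^ a ≤ stepFactor B R ^ d * ρ ^ a :=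
    mul_le_mul_of_nonneg_right (pow_le_pow_right₀ (one_le_stepFactor B hR) hT)
      (Real.rpow_nonneg hρ a)
  exact hc.norm_sub_le ((hc.norm_projV_le hρ hR hrR hspan).trans hpow)
    ((hc.symm.norm_projV_le hρ hR hrR hspan).trans hpow)

lemma GoodParams.exponent_mono {B : Basis (Fin d) ℝ (EuclideanSpace ℝ (Fin d))} {ρ r κ : ℝ}
    {α : ℕ → ℝ} (h : GoodParams B ρ r κ α) {m n : ℕ} (hmn : m ≤ n) (hn : n ≤ d) :
    α m ≤ α n := by
  induction n, hmn using Nat.le_induction with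
  | base => exact le_rfl
  | succ n hmn ih =>
    have h1 := h.2.2.2.1 n hn
    have h2 : 0 ≤ 2 * κ * (d : ℝ) ^ 2 := by have := h.2.1; positivity
    linarith [ih (by omega)]

/-- For large `ρ` the accumulated losses are absorbed by one increment of the exponents. -/
lemma GoodParams.stepFactor_bound {B : Basis (Fin d) ℝ (EuclideanSpace ℝ (Fin d))}
    {ρ r κ : ℝ} {α : ℕ → ℝ} (h : GoodParams B ρ r κ α) (hd : 2 ≤ d)
    (hlarge : 3 * (3 + 2 * angleConst B) ^ (d + 1) ≤ ρ ^ κ) {n : ℕ} (hn : n < d) :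
    3 * stepFactor B (ρ ^ κ) ^ (d + 1) * ρ ^ α n < ρ ^ α (n + 1) := by
  obtain ⟨hρ, hκ, -, hα, -, -, -⟩ := h
  have hρ0 : 0 < ρ := by linarith
  set K := 3 + 2 * angleConst B with hK
  have hK3 : 3 ≤ K := by linarith [angleConst_nonneg B]
  set R := ρ ^ κ with hRdef
  have hR1 : 1 ≤ R := Real.one_le_rpow hρ hκ.le
  have hstep : stepFactor B R ≤ K * R ^ d := by
    have : 1 ≤ R ^ d := one_le_pow₀ hR1
    unfold stepFactor
    rw [hK]
    nlinarith
  have hstep0 : 0 ≤ stepFactor B R := zero_le_one.trans (one_le_stepFactor B (by linarith))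
  have hρ1 : 1 < ρ := by
    refine lt_of_le_of_ne hρ fun h1 => ?_
    have hR : R = 1 := by rw [hRdef, ← h1, Real.one_rpow]
    have : 1 ≤ K ^ (d + 1) := one_le_pow₀ (by linarith)
    linarith
  calc 3 * stepFactor B R ^ (d + 1) * ρ ^ α n
      ≤ 3 * (K * R ^ d) ^ (d + 1) * ρ ^ α n := by gcongr
    _ = (3 * K ^ (d + 1)) * R ^ (d * (d + 1)) * ρ ^ α n := by
        rw [mul_pow, ← pow_mul]; ring
    _ ≤ R * R ^ (d * (d + 1)) * ρ ^ α n := by gcongr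
    _ = R ^ (d * (d + 1) + 1) * ρ ^ α n := by rw [pow_succ']
    _ ≤ R ^ (2 * d ^ 2) * ρ ^ α n := by
        gcongr
        nlinarith
    _ = ρ ^ (α n + 2 * κ * (d : ℝ) ^ 2) := by
        rw [hRdef, ← Real.rpow_mul_natCast hρ0.le, ← Real.rpow_add hρ0]
        congr 1
        push_cast
        ring
    _ < ρ ^ α (n + 1) := Real.rpow_lt_rpow_of_exponent_lt hρ1 (hα n hn)

lemma not_mem_Xi2_of_mem_Xi {B : Basis (Fin d) ℝ (EuclideanSpace ℝ (Fin d))} {ρ r : ℝ}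
    {α : ℕ → ℝ} {V W : Submodule ℝ (EuclideanSpace ℝ (Fin d))}
    (hW : IsLatticeSubspace B r W) (hVW : finrank ℝ V < finrank ℝ W)
    {ξ : EuclideanSpace ℝ (Fin d)} (hξ : ξ ∈ Xi B ρ r α V) : ξ ∉ Xi2 B ρ r α W :=
  fun h => hξ.2 (mem_biUnion (mem_ofPred.mpr ⟨hW, hVW⟩) h)

/-- For large `ρ`, `Ξ(V)` is disjoint from `Ξ₂(W)` as soon as `W` is not contained in `V`. -/
lemma Xi_inter_Xi2_eq_empty {B : Basis (Fin d) ℝ (EuclideanSpace ℝ (Fin d))}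
    {ρ r κ : ℝ} {α : ℕ → ℝ} (h : GoodParams B ρ r κ α) (hd : 2 ≤ d)
    (hlarge : 3 * (3 + 2 * angleConst B) ^ (d + 1) ≤ ρ ^ κ)
    {V W : Submodule ℝ (EuclideanSpace ℝ (Fin d))} (hV : IsLatticeSubspace B r V)
    (hW : IsLatticeSubspace B r W) (hWV : ¬ W ≤ V) :
    Xi B ρ r α V ∩ Xi2 B ρ r α W = ∅ := by
  obtain ⟨hρ, -, -, -, -, hrR, hspan⟩ := id h
  have hρ0 : 0 < ρ := by linarith
  have hR : 0 < ρ ^ κ := Real.rpow_pos_of_pos hρ0 κ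
  have hA := one_le_stepFactor B hR
  rw [eq_empty_iff_forall_notMem]
  rintro ξ ⟨hξV, hξW⟩
  have hdim : finrank ℝ W ≤ finrank ℝ V := by
    by_contra! hlt
    exact not_mem_Xi2_of_mem_Xi hW hlt hξV hξW
  obtain ⟨θ, hθ, hθW, hθV⟩ : ∃ θ ∈ Theta0 B r, θ ∈ W ∧ θ ∉ V := by
    obtain ⟨S, hS, rfl⟩ := hW
    rw [span_le, not_subset] at hWV
    obtain ⟨θ, hθS, hθV⟩ := hWV
    exact ⟨θ, hS hθS, subset_span hθS, hθV⟩
  have hW1 : 1 ≤ finrank ℝ W := by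
    rw [one_le_finrank_iff]
    rintro rfl
    exact hWV bot_le
  obtain ⟨ζ, hζ, hζξ⟩ := hξV.1
  obtain ⟨η, hη, hηξ⟩ := hξW
  have hζη : ζ ∈ Ups B ρ (α 1) r η := ReflTransGen.trans hηξ (mem_Ups_symm hζξ)
  have hU := finrank_lt_finrank_sup_span hθV
  have hUd : finrank ℝ (V ⊔ span ℝ {θ} : Submodule ℝ (EuclideanSpace ℝ (Fin d))) ≤ d := by
    simpa using (V ⊔ span ℝ {θ}).finrank_le
  set n := finrank ℝ V with hn
  set b := 3 * stepFactor B (ρ ^ κ) ^ d * ρ ^ α n with hb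
  have hpow : 1 ≤ stepFactor B (ρ ^ κ) ^ d := one_le_pow₀ hA
  have hα1 : ρ ^ α 1 ≤ ρ ^ α n :=
    Real.rpow_le_rpow_of_exponent_le hρ (h.exponent_mono (hW1.trans hdim) (by omega))
  have hαW : ρ ^ α (finrank ℝ W) ≤ ρ ^ α n :=
    Real.rpow_le_rpow_of_exponent_le hρ (h.exponent_mono hdim (by omega))
  have hαn : 0 < ρ ^ α n := Real.rpow_pos_of_pos hρ0 _
  have hηV : ‖projV V η‖ ≤ b := by
    have h1 := norm_projV_le_add V η ζ
    have h2 := norm_sub_le_of_mem_Ups hρ0.le hR hrR hspan hζη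
    have h3 : ‖projV V ζ‖ < ρ ^ α n := hζ
    have h4 : stepFactor B (ρ ^ κ) ^ d * ρ ^ α 1 ≤ stepFactor B (ρ ^ κ) ^ d * ρ ^ α n := by
      gcongr
    have h5 : ρ ^ α n ≤ stepFactor B (ρ ^ κ) ^ d * ρ ^ α n :=
      le_mul_of_one_le_left hαn.le hpow
    rw [hb]
    linarith
  have hηθ : |⟪η, θ⟫| ≤ b * ‖θ‖ := by
    have h1 := abs_inner_le_of_mem hθW η
    have h2 : ‖projV W η‖ < ρ ^ α (finrank ℝ W) := hη
    have h3 : ‖projV W η‖ ≤ b := by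
      rw [hb]
      nlinarith
    rw [real_inner_comm, mul_comm]
    exact h1.trans (by gcongr)
  have hstep := norm_projV_sup_lattice_le B hR hrR hspan hV hθ hθV hηV hηθ
  have hηU : η ∈ Xi1 ρ α (V ⊔ span ℝ {θ}) := by
    have h1 := h.stepFactor_bound hd hlarge (n := n) (by omega)
    have h2 : ρ ^ α (n + 1) ≤
        ρ ^ α (finrank ℝ (V ⊔ span ℝ {θ} : Submodule ℝ (EuclideanSpace ℝ (Fin d)))) :=
      Real.rpow_le_rpow_of_exponent_le hρ (h.exponent_mono hU hUd)
    have h3 : stepFactor B (ρ ^ κ) * b = 3 * stepFactor B (ρ ^ κ) ^ (d + 1) * ρ ^ α n := by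
      rw [hb, pow_succ]; ring
    have h4 : 0 ≤ b := (norm_nonneg _).trans hηV
    show ‖projV _ η‖ < _
    linarith
  exact not_mem_Xi2_of_mem_Xi (hV.sup_span hθ) hU hξV ⟨η, hηU, hηξ⟩

/-- The resonant layer of `θ` is `Ξ₁` of the line through `θ`. -/
lemma layer_subset_Xi1_span {ρ : ℝ} {α : ℕ → ℝ} {θ : EuclideanSpace ℝ (Fin d)} (hθ : θ ≠ 0) :
    layer ρ (α 1) θ ⊆ Xi1 ρ α (span ℝ {θ}) := by
  intro ξ hξ
  have hlt : |⟪ξ, θ⟫| < ρ ^ α 1 * ‖θ‖ := hξ.resolve_left hθ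
  have hpos : 0 < ‖θ‖ := norm_pos_iff.mpr hθ
  show ‖projV _ ξ‖ < ρ ^ α (finrank ℝ (span ℝ {θ}))
  rw [finrank_span_singleton hθ, projV_eq_starProjection, starProjection_singleton, norm_smul,
    real_inner_comm, norm_div, Real.norm_eq_abs]
  simp only [RCLike.ofReal_real_eq_id, id_eq, norm_pow, norm_norm]
  rw [div_mul_eq_mul_div, pow_two, mul_div_mul_right _ _ hpos.ne', div_lt_iff₀ hpos]
  exact hlt

/-- Lemma 5.16: for sufficiently large ρ, if V and W are strongly distinct
lattice r-subspaces then Ξ(V) ∩ Ξ₂(W) = ∅; in particular, if θ ∈ Θ_r with θ ∉ V then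
Ξ(V) ∩ Λ(θ) = ∅. -/
theorem Xi_disjoint_Xi2_of_stronglyDistinct
    (d : ℕ) (hd : 2 ≤ d) (B : Basis (Fin d) ℝ (EuclideanSpace ℝ (Fin d)))
    (κ : ℝ) (α : ℕ → ℝ) :
    ∃ ρ₀ : ℝ, ∀ ρ r : ℝ, ρ₀ ≤ ρ → GoodParams B ρ r κ α →
      (∀ V W : Submodule ℝ (EuclideanSpace ℝ (Fin d)),
        IsLatticeSubspace B r V → IsLatticeSubspace B r W →
        ¬ V ≤ W → ¬ W ≤ V →
        Xi B ρ r α V ∩ Xi2 B ρ r α W = ∅) ∧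
      (∀ V : Submodule ℝ (EuclideanSpace ℝ (Fin d)), IsLatticeSubspace B r V →
        ∀ θ ∈ Theta B r, θ ∉ V →
        Xi B ρ r α V ∩ layer ρ (α 1) θ = ∅) := by
  set K := 3 * (3 + 2 * angleConst B) ^ (d + 1) with hK
  have hK0 : 0 ≤ K := by have := angleConst_nonneg B; positivity
  refine ⟨K ^ κ⁻¹, fun ρ r hρ h => ?_⟩
  have hlarge : K ≤ ρ ^ κ := by
    rw [← Real.rpow_inv_rpow hK0 h.2.1.ne']
    exact Real.rpow_le_rpow (Real.rpow_nonneg hK0 _) hρ h.2.1.le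
  refine ⟨fun V W hV hW _ hWV => Xi_inter_Xi2_eq_empty h hd hlarge hV hW hWV,
    fun V hV θ hθ hθV => ?_⟩
  have hline : IsLatticeSubspace B r (span ℝ {θ}) :=
    ⟨{θ}, singleton_subset_iff.mpr ⟨hθ.1, hθ.2.2⟩, rfl⟩
  have hWV : ¬ span ℝ {θ} ≤ V := by rwa [span_singleton_le_iff_mem]
  rw [← subset_empty_iff, ← Xi_inter_Xi2_eq_empty h hd hlarge hV hline hWV]
  exact inter_subset_inter_right _ fun ξ hξ =>
    ⟨ξ, layer_subset_Xi1_span hθ.2.1 hξ, ReflTransGen.refl⟩
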